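/- arXiv:2103.17025 — 2 statements merged into one kernel-verified Lean document; each statement's English description precedes it below -/
import Mathlib

section
/- The function y ↦ log(1 + |y|²) (1 − |y|²)/(1 + |y|²)³ is integrable on ℝ² and ∫_{ℝ²} log(1 + |y|²) (1 − |y|²)/(1 + |y|²)³ dy = −π/2. -/
open MeasureTheory

/-!
The map `y ↦ ‖y‖²` pushes Lebesgue measure on the plane forward to `π` times Lebesgue measure on
`(0, ∞)`. With `u = 1 + ‖y‖²` the rational factor is `(2 - u) / u³ = 2 u⁻³ - u⁻²`, so the integral
is `π (2 ∫₁^∞ u⁻³ log u du - ∫₁^∞ u⁻² log u du) = π (2 · 1/4 - 1)`.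
-/

open Asymptotics Filter Metric Module Real Set Topology

section Radial

variable {E F : Type*} [NormedAddCommGroup E] [NormedSpace ℝ E] [FiniteDimensional ℝ E]
  [Nontrivial E] [MeasurableSpace E] [BorelSpace E] [NormedAddCommGroup F] [NormedSpace ℝ F]

theorem integrable_fun_norm_pow_finrank_addHaar (μ : Measure E) [μ.IsAddHaarMeasure] {f : ℝ → F} :
    Integrable (fun x ↦ f (‖x‖ ^ finrank ℝ E)) μ ↔ IntegrableOn f (Ioi 0) := by
  have hdim : 1 ≤ finrank ℝ E := finrank_pos
  rw [integrable_fun_norm_addHaar μ (f := fun r ↦ f (r ^ finrank ℝ E)),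
    ← integrableOn_Ioi_comp_rpow_iff' f (p := finrank ℝ E) (by positivity)]
  simp only [← Nat.cast_pred hdim, rpow_natCast]

theorem integral_fun_norm_pow_finrank_addHaar (μ : Measure E) [μ.IsAddHaarMeasure] (f : ℝ → F) :
    ∫ x, f (‖x‖ ^ finrank ℝ E) ∂μ = μ.real (ball 0 1) • ∫ s in Ioi 0, f s := by
  have hdim : 1 ≤ finrank ℝ E := finrank_pos
  rw [integral_fun_norm_addHaar μ (fun r ↦ f (r ^ finrank ℝ E)),
    ← integral_comp_rpow_Ioi_of_pos (g := f) (p := finrank ℝ E) (by positivity)]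
  simp only [← Nat.cast_pred hdim, rpow_natCast, mul_smul]
  rw [integral_smul, Nat.cast_smul_eq_nsmul, smul_comm]

theorem integrable_fun_norm_sq_euclideanSpace_fin_two {f : ℝ → F} :
    Integrable (fun y : EuclideanSpace ℝ (Fin 2) ↦ f (‖y‖ ^ 2)) ↔ IntegrableOn f (Ioi 0) := by
  simpa only [finrank_euclideanSpace_fin] using
    integrable_fun_norm_pow_finrank_addHaar (volume : Measure (EuclideanSpace ℝ (Fin 2))) (f := f)

theorem integral_fun_norm_sq_euclideanSpace_fin_two (f : ℝ → F) :
    ∫ y : EuclideanSpace ℝ (Fin 2), f (‖y‖ ^ 2) = π • ∫ s in Ioi 0, f s := by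
  have hball : volume.real (ball (0 : EuclideanSpace ℝ (Fin 2)) 1) = π := by
    simp [Measure.real, pi_nonneg]
  simpa only [finrank_euclideanSpace_fin, hball] using
    integral_fun_norm_pow_finrank_addHaar (volume : Measure (EuclideanSpace ℝ (Fin 2))) f

end Radial

section Translation

variable {F : Type*} [NormedAddCommGroup F]

theorem integrableOn_Ioi_comp_add_left_iff (f : ℝ → F) (a c : ℝ) :
    IntegrableOn (fun x ↦ f (a + x)) (Ioi c) ↔ IntegrableOn f (Ioi (a + c)) := by
  simpa [Function.comp_def] using (measurePreserving_add_left volume a).integrableOn_comp_preimage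
    (measurableEmbedding_addLeft a) (f := f) (s := Ioi (a + c))

theorem integral_comp_add_left_Ioi [NormedSpace ℝ F] (f : ℝ → F) (a c : ℝ) :
    ∫ x in Ioi c, f (a + x) = ∫ x in Ioi (a + c), f x := by
  simpa using (measurePreserving_add_left volume a).setIntegral_preimage_emb
    (measurableEmbedding_addLeft a) f (Ioi (a + c))

end Translation

section RpowMulLog

variable {a c : ℝ}

theorem tendsto_rpow_mul_log_atTop_nhds_zero (ha : a < 0) :
    Tendsto (fun t : ℝ ↦ t ^ a * log t) atTop (𝓝 0) := by
  refine (isLittleO_log_rpow_atTop (neg_pos.mpr ha)).tendsto_div_nhds_zero.congr' ?_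
  filter_upwards [eventually_ge_atTop 0] with t ht
  rw [rpow_neg ht, div_inv_eq_mul, mul_comm]

theorem isBigO_rpow_mul_log_atTop {b : ℝ} (hab : a < b) :
    (fun t : ℝ ↦ t ^ a * log t) =O[atTop] fun t ↦ t ^ b := by
  refine ((isBigO_refl (fun t : ℝ ↦ t ^ a) atTop).mul
    (isLittleO_log_rpow_atTop (sub_pos.mpr hab)).isBigO).congr' .rfl ?_
  filter_upwards [eventually_gt_atTop 0] with t ht
  rw [← rpow_add ht, add_sub_cancel]

theorem integrableOn_Ioi_rpow_mul_log_of_lt (ha : a < -1) (hc : 0 < c) :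
    IntegrableOn (fun t : ℝ ↦ t ^ a * log t) (Ioi c) := by
  obtain ⟨b, hab, hb⟩ := exists_between ha
  have hcont : ContinuousOn (fun t : ℝ ↦ t ^ a * log t) (Ici c) := fun t ht ↦
    have ht' : t ≠ 0 := (hc.trans_le ht).ne'
    ((continuousAt_rpow_const t a (.inl ht')).mul (continuousAt_log ht')).continuousWithinAt
  exact ((hcont.locallyIntegrableOn measurableSet_Ici).integrableOn_of_isBigO_atTop
    (isBigO_rpow_mul_log_atTop hab) (integrableAtFilter_rpow_atTop_iff.mpr hb)).mono_set
    Ioi_subset_Ici_self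

theorem hasDerivAt_primitive_rpow_mul_log (ha : a ≠ -1) {t : ℝ} (ht : 0 < t) :
    HasDerivAt (fun t : ℝ ↦ (t ^ (a + 1) * log t) / (a + 1) - t ^ (a + 1) / (a + 1) ^ 2)
      (t ^ a * log t) t := by
  have ha' : a + 1 ≠ 0 := fun h ↦ ha (eq_neg_of_add_eq_zero_left h)
  have hpow : HasDerivAt (fun t : ℝ ↦ t ^ (a + 1)) ((a + 1) * t ^ a) t := by
    simpa using hasDerivAt_rpow_const (p := a + 1) (.inl ht.ne')
  refine (((hpow.mul (hasDerivAt_log ht.ne')).div_const (a + 1)).sub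
    (hpow.div_const ((a + 1) ^ 2))).congr_deriv ?_
  rw [rpow_add_one ht.ne']
  field_simp
  ring

theorem integral_Ioi_rpow_mul_log_of_lt (ha : a < -1) (hc : 0 < c) :
    ∫ t in Ioi c, t ^ a * log t = c ^ (a + 1) / (a + 1) ^ 2 - c ^ (a + 1) * log c / (a + 1) := by
  have ha' : a + 1 < 0 := by linarith
  have hpow : Tendsto (fun t : ℝ ↦ t ^ (a + 1)) atTop (𝓝 0) := by
    simpa using tendsto_rpow_neg_atTop (neg_pos.mpr ha')
  have hlim := ((tendsto_rpow_mul_log_atTop_nhds_zero ha').div_const (a + 1)).sub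
    (hpow.div_const ((a + 1) ^ 2))
  rw [integral_Ioi_of_hasDerivAt_of_tendsto'
    (fun t ht ↦ hasDerivAt_primitive_rpow_mul_log ha.ne (hc.trans_le ht))
    (integrableOn_Ioi_rpow_mul_log_of_lt ha hc) hlim]
  ring

theorem integral_Ioi_one_rpow_mul_log_of_lt (ha : a < -1) :
    ∫ t in Ioi 1, t ^ a * log t = 1 / (a + 1) ^ 2 := by
  simp [integral_Ioi_rpow_mul_log_of_lt ha one_pos]

end RpowMulLog

section LogKernel

theorem log_mul_two_sub_div_cube_eq {u : ℝ} (hu : 0 < u) :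
    log u * ((2 - u) / u ^ 3) = 2 * (u ^ (-3 : ℝ) * log u) - u ^ (-2 : ℝ) * log u := by
  simp only [rpow_neg hu.le, rpow_ofNat]
  field_simp

theorem integrableOn_Ioi_log_mul_two_sub_div_cube {c : ℝ} (hc : 0 < c) :
    IntegrableOn (fun u : ℝ ↦ log u * ((2 - u) / u ^ 3)) (Ioi c) := by
  have h2 : (-2 : ℝ) < -1 := by norm_num
  have h3 : (-3 : ℝ) < -1 := by norm_num
  refine (integrableOn_congr_fun (fun _ (hu : c < _) ↦ log_mul_two_sub_div_cube_eq (hc.trans hu))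
    measurableSet_Ioi).mpr ?_
  exact ((integrableOn_Ioi_rpow_mul_log_of_lt h3 hc).const_mul 2).sub
    (integrableOn_Ioi_rpow_mul_log_of_lt h2 hc)

theorem integral_Ioi_one_log_mul_two_sub_div_cube :
    ∫ u in Ioi (1 : ℝ), log u * ((2 - u) / u ^ 3) = -(1 / 2) := by
  have h2 : (-2 : ℝ) < -1 := by norm_num
  have h3 : (-3 : ℝ) < -1 := by norm_num
  calc ∫ u in Ioi (1 : ℝ), log u * ((2 - u) / u ^ 3)
    _ = ∫ u in Ioi (1 : ℝ), (2 * (u ^ (-3 : ℝ) * log u) - u ^ (-2 : ℝ) * log u) :=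
      setIntegral_congr_fun measurableSet_Ioi fun _ hu ↦
        log_mul_two_sub_div_cube_eq (one_pos.trans hu)
    _ = 2 * (1 / (-3 + 1) ^ 2) - 1 / (-2 + 1) ^ 2 := by
      rw [integral_sub ((integrableOn_Ioi_rpow_mul_log_of_lt h3 one_pos).const_mul 2)
        (integrableOn_Ioi_rpow_mul_log_of_lt h2 one_pos), integral_const_mul,
        integral_Ioi_one_rpow_mul_log_of_lt h3, integral_Ioi_one_rpow_mul_log_of_lt h2]
    _ = -(1 / 2) := by norm_num

end LogKernel

/-- The function `y ↦ log(1+|y|²)(1-|y|²)/(1+|y|²)³` is integrable on `ℝ²` and its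
integral equals `-π/2`. -/
theorem integral_log_kernel_plane :
    Integrable (fun y : EuclideanSpace ℝ (Fin 2) =>
        Real.log (1 + ‖y‖ ^ 2) * ((1 - ‖y‖ ^ 2) / (1 + ‖y‖ ^ 2) ^ 3)) ∧
      (∫ y : EuclideanSpace ℝ (Fin 2),
          Real.log (1 + ‖y‖ ^ 2) * ((1 - ‖y‖ ^ 2) / (1 + ‖y‖ ^ 2) ^ 3)) = -(Real.pi / 2) := by
  let g (u : ℝ) : ℝ := log u * ((2 - u) / u ^ 3)
  have hkernel (s : ℝ) : log (1 + s) * ((1 - s) / (1 + s) ^ 3) = g (1 + s) := by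
    simp only [g]
    ring
  simp only [hkernel]
  constructor
  · rw [integrable_fun_norm_sq_euclideanSpace_fin_two (f := fun s ↦ g (1 + s)),
      integrableOn_Ioi_comp_add_left_iff, add_zero]
    exact integrableOn_Ioi_log_mul_two_sub_div_cube one_pos
  · rw [integral_fun_norm_sq_euclideanSpace_fin_two (fun s ↦ g (1 + s)),
      integral_comp_add_left_Ioi, add_zero, integral_Ioi_one_log_mul_two_sub_div_cube, smul_eq_mul]
    ring
end

section
/- Let α ≥ 2 be an integer. Then ∫_{ℝ²} |y|^{2/α} (2|y|² − 1)/(1 + |y|²)⁴ dy > 0. -/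
open MeasureTheory

/-!
In polar coordinates in dimension `d`, the integral with weight `‖y‖ ^ s` is a positive multiple
of `2 * M (p + 2) 4 - M p 4`, where `p = d + s` and `M p n = ∫₀^∞ t ^ (p - 1) / (1 + t ^ 2) ^ n dt`.
Integrating the derivative of `t ^ p / (1 + t ^ 2) ^ n` gives
`2 * n * M (p + 2) (n + 1) = p * M p n`, which together with
`M p (n + 1) + M (p + 2) (n + 1) = M p n` turns the difference into `(p - 2) / 2 * M p 3`. This is
positive for `2 < p < 6`.
-/

open Set Filter Asymptotics Topology Module

/-- The moment of order `p - 1` of the density `(1 + t ^ 2)⁻ⁿ` on the half-line, in which the radial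
integrals are expressed. The exponent is shifted as in a Mellin transform, so that the integral
converges exactly for `0 < p < 2 * n`. -/
noncomputable def radialMoment (p : ℝ) (n : ℕ) : ℝ :=
  ∫ t in Ioi (0 : ℝ), t ^ (p - 1) / (1 + t ^ 2) ^ n

section RadialMoment

variable {p : ℝ} {n : ℕ}

lemma isBigO_inv_one_add_sq_pow_atTop (n : ℕ) :
    (fun t : ℝ => ((1 + t ^ 2) ^ n)⁻¹) =O[atTop] fun t => t ^ (-(2 * n : ℝ)) := by
  refine .of_norm_eventuallyLE ?_
  filter_upwards [eventually_gt_atTop 0] with t ht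
  rw [Real.norm_of_nonneg (by positivity), Real.rpow_neg ht.le]
  norm_cast
  rw [pow_mul]
  gcongr
  linarith

lemma isBigO_inv_one_add_sq_pow_nhdsGT_zero (n : ℕ) :
    (fun t : ℝ => ((1 + t ^ 2) ^ n)⁻¹) =O[𝓝[>] 0] fun t => t ^ (-(0 : ℝ)) := by
  refine .of_norm_le fun t => ?_
  rw [Real.norm_of_nonneg (by positivity), neg_zero, Real.rpow_zero]
  exact inv_le_one_of_one_le₀ (one_le_pow₀ (by nlinarith))

lemma integrableOn_rpow_div_one_add_sq_pow (hp : 0 < p) (hpn : p < 2 * n) :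
    IntegrableOn (fun t : ℝ => t ^ (p - 1) / (1 + t ^ 2) ^ n) (Ioi 0) := by
  have hcont : Continuous fun t : ℝ => ((1 + t ^ 2) ^ n)⁻¹ :=
    Continuous.inv₀ (by fun_prop) fun t => by positivity
  simpa only [div_eq_mul_inv] using mellin_convergent_of_isBigO_scalar
    (hcont.locallyIntegrable.locallyIntegrableOn _)
    (isBigO_inv_one_add_sq_pow_atTop n) hpn (isBigO_inv_one_add_sq_pow_nhdsGT_zero n) hp

lemma tendsto_rpow_div_one_add_sq_pow_atTop (hpn : p < 2 * n) :
    Tendsto (fun t : ℝ => t ^ p / (1 + t ^ 2) ^ n) atTop (𝓝 0) := by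
  have hdecay : Tendsto (fun t : ℝ => t ^ p * t ^ (-(2 * n : ℝ))) atTop (𝓝 0) := by
    refine (tendsto_rpow_neg_atTop (sub_pos.2 hpn)).congr' ?_
    filter_upwards [eventually_gt_atTop 0] with t ht
    rw [← Real.rpow_add ht, neg_sub, sub_eq_add_neg]
  simpa only [div_eq_mul_inv] using
    ((isBigO_refl _ _).mul (isBigO_inv_one_add_sq_pow_atTop n)).trans_tendsto hdecay

lemma rpow_add_two_sub_one {t : ℝ} (ht : 0 < t) (p : ℝ) :
    t ^ (p + 2 - 1) = t ^ (p - 1) * t ^ 2 := by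
  rw [← Real.rpow_add_natCast ht.ne']
  congr 1
  push_cast
  ring

lemma hasDerivAt_rpow_div_one_add_sq_pow (p : ℝ) (n : ℕ) {t : ℝ} (ht : 0 < t) :
    HasDerivAt (fun t : ℝ => t ^ p / (1 + t ^ 2) ^ n)
      (p * (t ^ (p - 1) / (1 + t ^ 2) ^ n) -
        2 * n * (t ^ (p + 2 - 1) / (1 + t ^ 2) ^ (n + 1))) t := by
  have hden : HasDerivAt (fun t : ℝ => (1 + t ^ 2) ^ n)
      (n * (1 + t ^ 2) ^ (n - 1) * (2 * t)) t := by
    simpa using ((hasDerivAt_pow 2 t).const_add 1).fun_pow n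
  refine ((Real.hasDerivAt_rpow_const (.inl ht.ne')).fun_div hden (by positivity)).congr_deriv ?_
  rw [rpow_add_two_sub_one ht, Real.rpow_sub_one ht.ne']
  rcases n with _ | n
  · simp
  · simp only [Nat.add_sub_cancel]
    field_simp
    ring

lemma radialMoment_pos (hp : 0 < p) (hpn : p < 2 * n) : 0 < radialMoment p n := by
  have hpos : ∀ t ∈ Ioi (0 : ℝ), 0 < t ^ (p - 1) / (1 + t ^ 2) ^ n := fun t ht =>
    div_pos (Real.rpow_pos_of_pos ht _) (by positivity)
  rw [radialMoment, setIntegral_pos_iff_support_of_nonneg_ae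
    (ae_restrict_of_forall_mem measurableSet_Ioi fun t ht => (hpos t ht).le)
    (integrableOn_rpow_div_one_add_sq_pow hp hpn),
    inter_eq_right.2 (show Ioi (0 : ℝ) ⊆ Function.support _ from fun t ht => (hpos t ht).ne')]
  simp

lemma two_mul_mul_radialMoment_add_two_succ (hp : 0 < p) (hpn : p < 2 * n) :
    2 * n * radialMoment (p + 2) (n + 1) = p * radialMoment p n := by
  have hint := (integrableOn_rpow_div_one_add_sq_pow hp hpn).const_mul p
  have hint' := (integrableOn_rpow_div_one_add_sq_pow (p := p + 2) (n := n + 1)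
    (by linarith) (by push_cast; linarith)).const_mul (2 * n)
  have hcont : Continuous fun t : ℝ => t ^ p / (1 + t ^ 2) ^ n :=
    (Real.continuous_rpow_const hp.le).div (by fun_prop) fun t => by positivity
  have hftc := integral_Ioi_of_hasDerivAt_of_tendsto hcont.continuousWithinAt
    (fun t ht => hasDerivAt_rpow_div_one_add_sq_pow p n ht) (hint.sub hint')
    (tendsto_rpow_div_one_add_sq_pow_atTop hpn)
  rw [integral_sub hint hint', integral_const_mul, integral_const_mul, Real.zero_rpow hp.ne',
    zero_div, sub_zero] at hftc
  exact (sub_eq_zero.1 hftc).symm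

lemma radialMoment_succ_add_radialMoment_add_two_succ (hp : 0 < p) (hpn : p < 2 * n) :
    radialMoment p (n + 1) + radialMoment (p + 2) (n + 1) = radialMoment p n := by
  rw [radialMoment, radialMoment, ← integral_add
    (integrableOn_rpow_div_one_add_sq_pow hp (by push_cast; linarith))
    (integrableOn_rpow_div_one_add_sq_pow (by linarith) (by push_cast; linarith))]
  refine setIntegral_congr_fun measurableSet_Ioi fun t ht => ?_
  simp only [rpow_add_two_sub_one ht]
  field_simp
  ring

lemma integral_Ioi_rpow_mul_sub_div_one_add_sq_pow (a b : ℝ) (hp : 0 < p) (hpn : p < 2 * n) :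
    2 * n * ∫ t in Ioi (0 : ℝ), t ^ (p - 1) * (a * t ^ 2 - b) / (1 + t ^ 2) ^ (n + 1) =
      (a * p - b * (2 * n - p)) * radialMoment p n := by
  have hsplit : ∫ t in Ioi (0 : ℝ), t ^ (p - 1) * (a * t ^ 2 - b) / (1 + t ^ 2) ^ (n + 1) =
      a * radialMoment (p + 2) (n + 1) - b * radialMoment p (n + 1) := by
    rw [radialMoment, radialMoment, ← integral_const_mul, ← integral_const_mul, ← integral_sub
      ((integrableOn_rpow_div_one_add_sq_pow (by linarith) (by push_cast; linarith)).const_mul a)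
      ((integrableOn_rpow_div_one_add_sq_pow hp (by push_cast; linarith)).const_mul b)]
    refine setIntegral_congr_fun measurableSet_Ioi fun t ht => ?_
    simp only [rpow_add_two_sub_one ht]
    ring
  rw [hsplit]
  linear_combination (a + b) * two_mul_mul_radialMoment_add_two_succ hp hpn -
    2 * n * b * radialMoment_succ_add_radialMoment_add_two_succ hp hpn

end RadialMoment

section AddHaar

variable {E : Type*} [NormedAddCommGroup E] [NormedSpace ℝ E] [Nontrivial E]
  [FiniteDimensional ℝ E] [MeasurableSpace E] [BorelSpace E] (μ : Measure E) [μ.IsAddHaarMeasure]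

lemma integral_norm_rpow_mul (s : ℝ) (f : ℝ → ℝ) :
    ∫ y, ‖y‖ ^ s * f ‖y‖ ∂μ = finrank ℝ E * μ.real (Metric.ball 0 1) *
      ∫ t in Ioi (0 : ℝ), t ^ (finrank ℝ E + s - 1) * f t := by
  rw [integral_fun_norm_addHaar μ fun t => t ^ s * f t, nsmul_eq_mul, smul_eq_mul, mul_assoc]
  congr 2
  refine setIntegral_congr_fun measurableSet_Ioi fun t (ht : 0 < t) => ?_
  have hdim : 1 ≤ finrank ℝ E := finrank_pos
  simp only [smul_eq_mul]
  rw [← mul_assoc, ← Real.rpow_natCast, ← Real.rpow_add ht, Nat.cast_sub hdim, Nat.cast_one,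
    sub_add_eq_add_sub]

theorem integral_rpow_kernel_pos_general {s : ℝ} (hs : 2 < finrank ℝ E + s)
    (hs' : finrank ℝ E + s < 6) :
    0 < ∫ y, ‖y‖ ^ s * (2 * ‖y‖ ^ 2 - 1) / (1 + ‖y‖ ^ 2) ^ 4 ∂μ := by
  have hball : 0 < μ.real (Metric.ball 0 1) :=
    ENNReal.toReal_pos (Metric.measure_ball_pos _ _ one_pos).ne' measure_ball_lt_top.ne
  have hdim : 0 < finrank ℝ E := finrank_pos
  have hp : 0 < finrank ℝ E + s := by linarith
  have hp3 : finrank ℝ E + s < 2 * (3 : ℕ) := by push_cast; linarith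
  have hradial : 0 < ∫ t in Ioi (0 : ℝ),
      t ^ (finrank ℝ E + s - 1) * (2 * t ^ 2 - 1) / (1 + t ^ 2) ^ 4 := by
    have hmoment := integral_Ioi_rpow_mul_sub_div_one_add_sq_pow 2 1 hp hp3
    refine pos_of_mul_pos_right (hmoment ▸ mul_pos ?_ (radialMoment_pos hp hp3)) (by positivity)
    push_cast
    linarith
  simp only [mul_div_assoc] at hradial ⊢
  rw [integral_norm_rpow_mul μ s fun t => (2 * t ^ 2 - 1) / (1 + t ^ 2) ^ 4]
  positivity

end AddHaar

/-- For any integer `α ≥ 2`, `∫_{ℝ²} |y|^{2/α}(2|y|²-1)/(1+|y|²)⁴ dy > 0`. -/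
theorem integral_rpow_kernel_pos (α : ℕ) (hα : 2 ≤ α) :
    0 < ∫ y : EuclideanSpace ℝ (Fin 2),
        ‖y‖ ^ ((2 : ℝ) / (α : ℝ)) * (2 * ‖y‖ ^ 2 - 1) / (1 + ‖y‖ ^ 2) ^ 4 := by
  have hα' : (2 : ℝ) ≤ α := by exact_mod_cast hα
  have hexp : (2 : ℝ) / α ≤ 1 := div_le_one_of_le₀ hα' (by positivity)
  have hexp_pos : 0 < (2 : ℝ) / α := by positivity
  apply integral_rpow_kernel_pos_general <;> rw [finrank_euclideanSpace_fin] <;> push_cast <;>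
    linarith
end
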